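/- Let q be a prime power and let n, k, ℓ be nonnegative integers with k + ℓ ≤ n. If k ≠ ℓ, then Σ_{g ∈ GL(n,q)} U_k(q^{dim ker(g − id)}) · U_ℓ(q^{dim ker(g − id)}) = 0. If k = ℓ and 2k ≤ n, then Σ_{g ∈ GL(n,q)} U_k(q^{dim ker(g − id)})² = |GL(k,q)| · |GL(n,q)|, where |GL(m,q)| = ∏_{j=0}^{m−1}(q^m − q^j). -/

import Mathlib

/-- The `q`-analogue `[m]_q = 1 + q + ⋯ + q^{m-1}` of the natural number `m`. -/
def qInt (q m : ℕ) : ℕ := ∑ i ∈ Finset.range m, q ^ i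

/-- The `q`-factorial `[m]_q! = [m]_q [m-1]_q ⋯ [1]_q`. -/
def qFactorial (q m : ℕ) : ℕ := ∏ i ∈ Finset.range m, qInt q (i + 1)

/-- The Gaussian binomial coefficient `[m choose k]_q = [m]_q! / ([k]_q! [m-k]_q!)`. -/
def qBinom (q m k : ℕ) : ℕ := qFactorial q m / (qFactorial q k * qFactorial q (m - k))

/-- The Al-Salam–Carlitz polynomial (with parameter `a = 1`). -/
noncomputable def ascU (q k : ℕ) (x : ℝ) : ℝ :=
  ∑ j ∈ Finset.range (k + 1),
    (-1 : ℝ) ^ (k - j) * (q : ℝ) ^ Nat.choose (k - j) 2 * (qBinom q k j : ℝ) *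
      ∏ i ∈ Finset.range j, (x - (q : ℝ) ^ i)

/-- `|GL(m,q)| = ∏_{j=0}^{m−1} (q^m − q^j)`. -/
def cardGL (q m : ℕ) : ℕ := ∏ j ∈ Finset.range m, (q ^ m - q ^ j)

/-- `dim ker(g − id)` for `g ∈ GL(n,q)`. -/
noncomputable def dimFix (F : Type) [Field F] [Fintype F] (n : ℕ) (g : GL (Fin n) F) : ℕ :=
  Module.finrank F (LinearMap.ker (Matrix.mulVecLin ((g : Matrix (Fin n) (Fin n) F) - 1)))

/-!
Write `g_k = (X - 1)(X - q)⋯(X - q ^ (k - 1))`. The value of `g_k` at `q ^ dim ker (A - 1)` is the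
number of linearly independent `k`-tuples fixed by `A`. As `GL(n, q)` permutes all such tuples in
`F_q ^ n` transitively, Burnside's lemma says that the functional `L`, summation over `GL(n, q)`,
takes the same value `c = |GL(n, q)|` at every `g_k` with `k ≤ n`.

Since `X g_m = g_{m+1} + q ^ m g_m`, these values already force `L (g_j g_m) = c q ^ (j m)` for
`j + m ≤ n`. By Gauss's binomial formula `U_k` arises from `g_k` by replacing each `X ^ j` by `g_j`,
hence `L (U_k g_m) = c g_k(q ^ m)`. This vanishes for `m < k`, so expanding `U_ℓ` in the basis `g_m`
leaves nothing for `ℓ < k`, and only the leading term `c g_k(q ^ k)` for `ℓ = k`.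
-/

open Finset Polynomial

section QBinomial

variable (q : ℕ)

theorem qInt_add (m k : ℕ) : qInt q (m + k) = qInt q m + q ^ m * qInt q k := by
  simp only [qInt, sum_range_add, mul_sum, pow_add]

theorem qInt_succ_pos (m : ℕ) : 0 < qInt q (m + 1) := by
  simp [qInt, sum_range_succ']

theorem qFactorial_zero : qFactorial q 0 = 1 := rfl

theorem qFactorial_succ (m : ℕ) : qFactorial q (m + 1) = qInt q (m + 1) * qFactorial q m := by
  rw [qFactorial, prod_range_succ, mul_comm, qFactorial]

theorem qFactorial_pos (m : ℕ) : 0 < qFactorial q m :=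
  prod_pos fun i _ => qInt_succ_pos q i

theorem qFactorial_mul_qFactorial_dvd_qFactorial_add (i j : ℕ) :
    qFactorial q i * qFactorial q j ∣ qFactorial q (i + j) := by
  induction i generalizing j with
  | zero => simp [qFactorial_zero]
  | succ i ih =>
    induction j with
    | zero => simp [qFactorial_zero]
    | succ j ihj =>
      -- `[i + j + 2] = [i + 1] + q ^ (i + 1) [j + 1]`, and each summand absorbs one factor.
      rw [← add_assoc, qFactorial_succ q (i + 1 + j), add_assoc (i + 1), qInt_add, add_mul]
      refine dvd_add ?_ ?_
      · rw [qFactorial_succ q i, mul_assoc, add_right_comm, add_assoc]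
        exact mul_dvd_mul_left _ (ih (j + 1))
      · rw [qFactorial_succ q j, mul_left_comm, mul_comm (q ^ (i + 1)), mul_assoc]
        exact mul_dvd_mul_left _ (ihj.mul_left _)

theorem qBinom_add_mul_qFactorial_mul_qFactorial (k i : ℕ) :
    qBinom q (k + i) k * (qFactorial q k * qFactorial q i) = qFactorial q (k + i) := by
  rw [qBinom, Nat.add_sub_cancel_left]
  exact Nat.div_mul_cancel (qFactorial_mul_qFactorial_dvd_qFactorial_add q k i)

theorem qBinom_zero_right (m : ℕ) : qBinom q m 0 = 1 := by
  simp [qBinom, qFactorial_zero, qFactorial_pos]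

theorem qBinom_self (m : ℕ) : qBinom q m m = 1 := by
  simp [qBinom, qFactorial_zero, qFactorial_pos]

theorem qBinom_succ_succ {m k : ℕ} (hk : k < m) :
    qBinom q (m + 1) (k + 1) = qBinom q m k + q ^ (k + 1) * qBinom q m (k + 1) := by
  obtain ⟨i, rfl⟩ := Nat.exists_eq_add_of_le (Nat.succ_le_of_lt hk)
  have h_left := qBinom_add_mul_qFactorial_mul_qFactorial q k (i + 1)
  have h_right := qBinom_add_mul_qFactorial_mul_qFactorial q (k + 1) i
  rw [show k + (i + 1) = k + 1 + i by ring] at h_left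
  refine Nat.eq_of_mul_eq_mul_right
    (Nat.mul_pos (qFactorial_pos q (k + 1)) (qFactorial_pos q (i + 1))) ?_
  calc qBinom q (k + 1 + i + 1) (k + 1) * (qFactorial q (k + 1) * qFactorial q (i + 1))
      = qInt q (k + 1 + (i + 1)) * qFactorial q (k + 1 + i) := by
        rw [add_assoc (k + 1), qBinom_add_mul_qFactorial_mul_qFactorial, ← add_assoc,
          qFactorial_succ]
    _ = qInt q (k + 1) * qFactorial q (k + 1 + i) +
          q ^ (k + 1) * qInt q (i + 1) * qFactorial q (k + 1 + i) := by rw [qInt_add, add_mul]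
    _ = qInt q (k + 1) * (qBinom q (k + 1 + i) k * (qFactorial q k * qFactorial q (i + 1))) +
          q ^ (k + 1) * qInt q (i + 1) *
            (qBinom q (k + 1 + i) (k + 1) * (qFactorial q (k + 1) * qFactorial q i)) := by
        rw [h_left, h_right]
    _ = (qBinom q (k + 1 + i) k + q ^ (k + 1) * qBinom q (k + 1 + i) (k + 1)) *
          (qFactorial q (k + 1) * qFactorial q (i + 1)) := by
        rw [qFactorial_succ q k, qFactorial_succ q i]
        ring

end QBinomial

section GaussPoly

variable {R : Type*} [CommRing R]

/-- The Gaussian polynomial `(X - 1) (X - q) ⋯ (X - q ^ (k - 1))` of Goldman and Rota, the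
`q`-analogue of the falling factorial: its value at `q ^ d` counts the linearly independent
`k`-tuples in a `d`-dimensional space over a field with `q` elements. -/
noncomputable def gaussPoly (q : R) (k : ℕ) : R[X] := ∏ i ∈ range k, (X - C (q ^ i))

theorem gaussPoly_zero (q : R) : gaussPoly q 0 = 1 := rfl

theorem gaussPoly_succ (q : R) (k : ℕ) :
    gaussPoly q (k + 1) = gaussPoly q k * (X - C (q ^ k)) :=
  prod_range_succ _ _

theorem eval_gaussPoly (q x : R) (k : ℕ) :
    (gaussPoly q k).eval x = ∏ i ∈ range k, (x - q ^ i) := by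
  simp [gaussPoly, eval_prod]

theorem eval_gaussPoly_pow_of_lt (q : R) {m k : ℕ} (hmk : m < k) :
    (gaussPoly q k).eval (q ^ m) = 0 := by
  rw [eval_gaussPoly]
  exact prod_eq_zero (mem_range.2 hmk) (sub_self _)

theorem natDegree_gaussPoly_le (q : R) (k : ℕ) : (gaussPoly q k).natDegree ≤ k := by
  refine (natDegree_prod_le _ _).trans ?_
  simpa using sum_le_sum fun i (_ : i ∈ range k) => natDegree_X_sub_C_le (q ^ i)

theorem coeff_gaussPoly_self (q : R) (k : ℕ) : (gaussPoly q k).coeff k = 1 := by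
  induction k with
  | zero => simp [gaussPoly_zero]
  | succ k ih =>
    rw [gaussPoly_succ, coeff_mul_X_sub_C, ih, coeff_eq_zero_of_natDegree_lt
      (Nat.lt_succ_of_le (natDegree_gaussPoly_le q k)), zero_mul, sub_zero]

theorem natCast_prod_pow_sub_pow {q : ℕ} (hq : 0 < q) {j d : ℕ}
    (hjd : j ≤ d) :
    ((∏ i ∈ range j, (q ^ d - q ^ i) : ℕ) : R) = (gaussPoly (q : R) j).eval ((q : R) ^ d) := by
  rw [eval_gaussPoly, Nat.cast_prod]
  refine prod_congr rfl fun i hi => ?_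
  rw [Nat.cast_sub (Nat.pow_le_pow_right hq ((mem_range.1 hi).le.trans hjd)), Nat.cast_pow,
    Nat.cast_pow]

theorem natCast_cardGL {q : ℕ} (hq : 0 < q) (m : ℕ) :
    (cardGL q m : R) = (gaussPoly (q : R) m).eval ((q : R) ^ m) :=
  natCast_prod_pow_sub_pow hq le_rfl

theorem coeff_gaussPoly_natCast (q : ℕ) {k j : ℕ} (hj : j ≤ k) :
    (gaussPoly (q : R) k).coeff j =
      (-1) ^ (k - j) * (q : R) ^ (k - j).choose 2 * (qBinom q k j : R) := by
  induction k generalizing j with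
  | zero => simp [Nat.le_zero.1 hj, gaussPoly_zero, qBinom_zero_right]
  | succ k ih =>
    rcases j with - | j
    · rw [gaussPoly_succ, mul_coeff_zero, ih (Nat.zero_le k), coeff_sub, coeff_X_zero, coeff_C_zero]
      simp only [qBinom_zero_right, tsub_zero, Nat.choose_succ_succ' k 1, Nat.choose_one_right]
      ring
    rcases (Nat.le_of_succ_le_succ hj).eq_or_lt with rfl | hjk
    · simp [coeff_gaussPoly_self, qBinom_self]
    · obtain ⟨i, rfl⟩ := Nat.exists_eq_add_of_le (Nat.succ_le_of_lt hjk)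
      rw [gaussPoly_succ, coeff_mul_X_sub_C, ih (by omega), ih (by omega), qBinom_succ_succ q hjk,
        show j + 1 + i - j = i + 1 by omega, show j + 1 + i - (j + 1) = i by omega,
        show j + 1 + i + 1 - (j + 1) = i + 1 by omega, Nat.choose_succ_succ' i 1,
        Nat.choose_one_right]
      push_cast [Nat.succ_eq_add_one]
      ring

/-- The Al-Salam–Carlitz polynomial (with parameter `a = 1`), written as the umbral image of the
Gaussian polynomial: replace each power `X ^ j` in `gaussPoly q k` by `gaussPoly q j`. -/
noncomputable def alSalamCarlitz (q : R) (k : ℕ) : R[X] :=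
  ∑ j ∈ range (k + 1), (gaussPoly q k).coeff j • gaussPoly q j

theorem eval_alSalamCarlitz (q k : ℕ) (x : ℝ) :
    (alSalamCarlitz (q : ℝ) k).eval x = ascU q k x := by
  rw [alSalamCarlitz, eval_finsetSum]
  refine sum_congr rfl fun j hj => ?_
  rw [eval_smul, eval_gaussPoly, coeff_gaussPoly_natCast q (mem_range_succ_iff.1 hj), smul_eq_mul]

end GaussPoly

section Orthogonality

variable {R : Type*} [CommRing R] {q c : R} {n : ℕ} {L : R[X] →ₗ[R] R}

theorem map_gaussPoly_mul_gaussPoly (hL : ∀ j ≤ n, L (gaussPoly q j) = c) {j m : ℕ}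
    (hjm : j + m ≤ n) : L (gaussPoly q j * gaussPoly q m) = c * (q ^ m) ^ j := by
  induction j generalizing m with
  | zero => simpa [gaussPoly_zero] using hL m (by omega)
  | succ j ih =>
    have h_exchange : gaussPoly q (j + 1) * gaussPoly q m =
        gaussPoly q j * gaussPoly q (m + 1) +
          (q ^ m - q ^ j) • (gaussPoly q j * gaussPoly q m) := by
      rw [gaussPoly_succ, gaussPoly_succ, smul_eq_C_mul, C_sub]
      ring
    rw [h_exchange, map_add, map_smul, ih (by omega), ih (by omega), smul_eq_mul]
    ring

theorem map_alSalamCarlitz_mul_gaussPoly (hL : ∀ j ≤ n, L (gaussPoly q j) = c) {k m : ℕ}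
    (hkm : k + m ≤ n) :
    L (alSalamCarlitz q k * gaussPoly q m) = c * (gaussPoly q k).eval (q ^ m) := by
  rw [eval_eq_sum_range' (Nat.lt_succ_of_le (natDegree_gaussPoly_le q k)), alSalamCarlitz,
    sum_mul, map_sum, mul_sum]
  refine sum_congr rfl fun j hj => ?_
  have hjk := mem_range_succ_iff.1 hj
  rw [smul_mul_assoc, map_smul, map_gaussPoly_mul_gaussPoly hL (by omega), smul_eq_mul]
  ring

theorem map_alSalamCarlitz_mul_alSalamCarlitz (hL : ∀ j ≤ n, L (gaussPoly q j) = c) {k l : ℕ}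
    (hkl : k + l ≤ n) :
    L (alSalamCarlitz q k * alSalamCarlitz q l) =
      ∑ m ∈ range (l + 1), (gaussPoly q l).coeff m * (c * (gaussPoly q k).eval (q ^ m)) := by
  rw [alSalamCarlitz.eq_def q l, mul_sum, map_sum]
  refine sum_congr rfl fun m hm => ?_
  have hml := mem_range_succ_iff.1 hm
  rw [mul_smul_comm, map_smul, map_alSalamCarlitz_mul_gaussPoly hL (by omega), smul_eq_mul]

theorem map_alSalamCarlitz_mul_of_ne (hL : ∀ j ≤ n, L (gaussPoly q j) = c) {k l : ℕ}
    (hkl : k + l ≤ n) (hne : k ≠ l) : L (alSalamCarlitz q k * alSalamCarlitz q l) = 0 := by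
  wlog hlk : l < k generalizing k l
  · rw [mul_comm]
    exact this (by omega) hne.symm (by omega)
  rw [map_alSalamCarlitz_mul_alSalamCarlitz hL hkl]
  refine sum_eq_zero fun m hm => ?_
  rw [eval_gaussPoly_pow_of_lt q ((mem_range_succ_iff.1 hm).trans_lt hlk), mul_zero, mul_zero]

theorem map_alSalamCarlitz_mul_self (hL : ∀ j ≤ n, L (gaussPoly q j) = c) {k : ℕ}
    (hk : k + k ≤ n) :
    L (alSalamCarlitz q k * alSalamCarlitz q k) = c * (gaussPoly q k).eval (q ^ k) := by
  rw [map_alSalamCarlitz_mul_alSalamCarlitz hL hk, sum_range_succ, coeff_gaussPoly_self, one_mul,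
    sum_eq_zero, zero_add]
  intro m hm
  rw [eval_gaussPoly_pow_of_lt q (mem_range.1 hm), mul_zero, mul_zero]

end Orthogonality

section FixedPoints

open Module MulAction

theorem sum_natCard_fixedBy_of_isPretransitive (G X : Type*) [Group G] [Fintype G] [MulAction G X]
    [Nonempty X] [IsPretransitive G X] :
    ∑ g : G, Nat.card (fixedBy X g) = Nat.card G := by
  classical
  have : Finite X := Finite.of_surjective _ (surjective_smul G (Classical.arbitrary X))
  have := Fintype.ofFinite X
  have := Fintype.ofFinite (Quotient (orbitRel G X))
  obtain ⟨_⟩ := (pretransitive_iff_unique_quotient_of_nonempty G X).1 inferInstance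
  simpa [Nat.card_eq_fintype_card] using sum_card_fixedBy_eq_card_orbits_mul_card_group G X

variable {K V ι : Type*} [DivisionRing K] [AddCommGroup V] [Module K V]

theorem natCast_card_linearIndependent (R : Type*) [CommRing R] [Fintype K] [Finite V] (j : ℕ) :
    (Nat.card {s : Fin j → V // LinearIndependent K s} : R) =
      (gaussPoly (Fintype.card K : R) j).eval ((Fintype.card K : R) ^ finrank K V) := by
  rcases le_or_gt j (finrank K V) with hj | hj
  · rw [card_linearIndependent hj, ← natCast_prod_pow_sub_pow Fintype.card_pos hj, prod_range]
  · have : IsEmpty {s : Fin j → V // LinearIndependent K s} :=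
      ⟨fun s => hj.not_ge (by simpa using s.2.fintype_card_le_finrank)⟩
    rw [eval_gaussPoly_pow_of_lt _ hj, Nat.card_of_isEmpty, Nat.cast_zero]

theorem orbit_linearEquiv_eq_setOf_linearIndependent [Finite ι] {s : ι → V}
    (hs : LinearIndependent K s) : orbit (V ≃ₗ[K] V) s = {t | LinearIndependent K t} := by
  ext t
  refine ⟨?_, fun ht : LinearIndependent K t => ?_⟩
  · rintro ⟨g, rfl⟩
    exact hs.map' g.toLinearMap g.ker
  · have : FiniteDimensional K (Submodule.span K (Set.range s)) :=
      FiniteDimensional.span_of_finite K (Set.finite_range s)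
    obtain ⟨g, hg⟩ := Submodule.exists_linearEquiv_restrict_eq
      (hs.linearCombinationEquiv.symm ≪≫ₗ ht.linearCombinationEquiv)
    refine ⟨g, funext fun i => ?_⟩
    simpa using (hg (hs.linearCombinationEquiv (Finsupp.single i 1))).symm

theorem natCard_fixedBy_orbit_linearEquiv [Finite ι] {s : ι → V} (hs : LinearIndependent K s)
    (g : V ≃ₗ[K] V) :
    Nat.card (fixedBy (orbit (V ≃ₗ[K] V) s) g) =
      Nat.card {t : ι → LinearMap.fixedSubmodule (g : V →ₗ[K] V) // LinearIndependent K t} := by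
  have h_orbit := orbit_linearEquiv_eq_setOf_linearIndependent hs
  refine Nat.card_congr
    { toFun t := ⟨fun i => ⟨t.1.1 i, congrFun (congrArg Subtype.val t.2) i⟩, ?_⟩
      invFun t := ⟨⟨fun i => t.1 i, ?_⟩, Subtype.ext (funext fun i => (t.1 i).2)⟩
      left_inv _ := rfl
      right_inv _ := rfl }
  · exact LinearIndependent.of_comp (Submodule.subtype _) (h_orbit.subset t.1.2)
  · exact h_orbit.superset (t.2.map' (Submodule.subtype _) (Submodule.ker_subtype _))

variable [Fintype K] [Fintype (V ≃ₗ[K] V)]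

variable (K V) in
/-- The (unnormalised) distribution of the number `|K| ^ dim ker (g - 1)` of fixed vectors of
`g : V ≃ₗ[K] V`, as the linear functional that sums the values of a polynomial at these numbers. -/
noncomputable def fixedVectorSum (R : Type*) [CommRing R] : R[X] →ₗ[R] R :=
  ∑ g : V ≃ₗ[K] V,
    leval ((Fintype.card K : R) ^ finrank K (LinearMap.fixedSubmodule (g : V →ₗ[K] V)))

theorem fixedVectorSum_apply {R : Type*} [CommRing R] (p : R[X]) :
    fixedVectorSum K V R p = ∑ g : V ≃ₗ[K] V,
      p.eval ((Fintype.card K : R) ^ finrank K (LinearMap.fixedSubmodule (g : V →ₗ[K] V))) := by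
  simp [fixedVectorSum]

theorem fixedVectorSum_gaussPoly [Finite V] (R : Type*) [CommRing R] {j : ℕ}
    (hj : j ≤ finrank K V) :
    fixedVectorSum K V R (gaussPoly (Fintype.card K : R) j) = Nat.card (V ≃ₗ[K] V) := by
  obtain ⟨s, hs⟩ := exists_linearIndependent_of_le_finrank hj
  have : Nonempty (orbit (V ≃ₗ[K] V) s) := (nonempty_orbit s).to_subtype
  rw [fixedVectorSum_apply,
    ← sum_natCard_fixedBy_of_isPretransitive (V ≃ₗ[K] V) (orbit (V ≃ₗ[K] V) s), Nat.cast_sum]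
  refine sum_congr rfl fun g _ => ?_
  rw [natCard_fixedBy_orbit_linearEquiv hs, natCast_card_linearIndependent]

end FixedPoints

section GeneralLinearGroup

open Matrix.GeneralLinearGroup LinearMap.GeneralLinearGroup

/-- Invertible matrices as linear automorphisms of the space of column vectors. -/
def glEquivLinearEquiv (R m : Type*) [CommRing R] [Fintype m] [DecidableEq m] :
    GL m R ≃* ((m → R) ≃ₗ[R] (m → R)) :=
  toLin.trans (generalLinearEquiv R (m → R))

theorem natCard_linearEquiv_fin_fun (F : Type*) [Field F] [Fintype F] (n : ℕ) :
    Nat.card ((Fin n → F) ≃ₗ[F] (Fin n → F)) = cardGL (Fintype.card F) n := by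
  rw [← Nat.card_congr (glEquivLinearEquiv F (Fin n)).toEquiv, Matrix.card_GL_field, cardGL,
    prod_range]

variable {F : Type} [Field F] [Fintype F] {n : ℕ}

theorem finrank_fixedSubmodule_glEquivLinearEquiv (g : GL (Fin n) F) :
    Module.finrank F (LinearMap.fixedSubmodule
      (glEquivLinearEquiv F (Fin n) g : (Fin n → F) →ₗ[F] (Fin n → F))) = dimFix F n g := by
  have h_sub : Matrix.mulVecLin ((g : Matrix (Fin n) (Fin n) F) - 1) =
      (glEquivLinearEquiv F (Fin n) g : (Fin n → F) →ₗ[F] (Fin n → F)) - LinearMap.id := by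
    rw [← Matrix.toLin'_apply', map_sub, Matrix.toLin'_one]
    rfl
  rw [LinearMap.fixedSubmodule_eq_ker, dimFix, h_sub]

theorem sum_eval_pow_dimFix [DecidableEq F] [Fintype ((Fin n → F) ≃ₗ[F] (Fin n → F))]
    {R : Type*} [CommRing R] (p : R[X]) :
    ∑ g : GL (Fin n) F, p.eval ((Fintype.card F : R) ^ dimFix F n g) =
      fixedVectorSum F (Fin n → F) R p := by
  rw [fixedVectorSum_apply]
  refine Fintype.sum_equiv (glEquivLinearEquiv F (Fin n)).toEquiv _ _ fun g => ?_
  rw [← finrank_fixedSubmodule_glEquivLinearEquiv]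
  rfl

end GeneralLinearGroup

/-- Orthogonality of the Al-Salam–Carlitz polynomials with respect to the distribution of
the number of fixed points in `GL(n,q)`:
if `k + ℓ ≤ n` and `k ≠ ℓ` then `Σ_{g ∈ GL(n,q)} U_k(q^{dim ker(g−id)}) U_ℓ(q^{dim ker(g−id)}) = 0`,
and if `2k ≤ n` then `Σ_{g ∈ GL(n,q)} U_k(q^{dim ker(g−id)})² = |GL(k,q)|·|GL(n,q)|`. -/
theorem statement11 (q : ℕ) (hq : IsPrimePow q) (F : Type) [Field F] [Fintype F] [DecidableEq F]
    (hF : Fintype.card F = q) (n k ℓ : ℕ) (hkl : k + ℓ ≤ n) :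
    (k ≠ ℓ →
      ∑ g : GL (Fin n) F,
        ascU q k ((q : ℝ) ^ dimFix F n g) * ascU q ℓ ((q : ℝ) ^ dimFix F n g) = 0) ∧
    (k = ℓ → 2 * k ≤ n →
      ∑ g : GL (Fin n) F, (ascU q k ((q : ℝ) ^ dimFix F n g)) ^ 2
        = (cardGL q k : ℝ) * (cardGL q n : ℝ)) := by
  subst hF
  let := Fintype.ofEquiv _ (glEquivLinearEquiv F (Fin n)).toEquiv
  have h_moments : ∀ j ≤ n, fixedVectorSum F (Fin n → F) ℝ (gaussPoly (Fintype.card F : ℝ) j) =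
      cardGL (Fintype.card F) n := fun j hj => by
    rw [fixedVectorSum_gaussPoly ℝ (by simpa using hj), natCard_linearEquiv_fin_fun]
  simp only [← eval_alSalamCarlitz, pow_two (eval _ _), ← eval_mul, sum_eval_pow_dimFix]
  refine ⟨map_alSalamCarlitz_mul_of_ne h_moments hkl, fun _ hk => ?_⟩
  rw [map_alSalamCarlitz_mul_self h_moments (two_mul k ▸ hk), mul_comm,
    natCast_cardGL Fintype.card_pos k]
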